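/- Fix q ∈ (0,1) and an integer N ≥ 1. Then the subset C_N := {(f S^{*N}, g) : (f, g) ∈ B̄} of T × T, which is a left B̄-module under the componentwise action, is generated by the single element (z_q^{*N}, 1): one has (z_q^{*N}, 1) ∈ C_N and C_N = {(a,b)·(z_q^{*N}, 1) : (a,b) ∈ B̄} = {(a z_q^{*N}, b) : (a,b) ∈ B̄}. (This realizes Proposition 3.4 of the paper: the left module over the quantum 2-sphere C*-algebra generated by the quantum line bundle element a^{*N} of O(S³_{pq}) is the whole associated line bundle C(S³_{pq})_N.) -/

import Mathlib

/-!
The weighted shift satisfies `z^N = S^N W`, where `W` is the diagonal operator with eigenvalues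
`w_n = ∏_{k < N} √(1 - q^{n+k+1})`; taking adjoints, `z^{*N} = W S^{*N}`. Bernoulli's inequality
gives `0 ≤ 1 - w_n ≤ N q^{n+1}`, and `w_n ≥ (1 - q)^N`, so both `w_n - 1` and `w_n⁻¹ - 1` are
summable. A diagonal operator with summable eigenvalues is a norm-convergent series of multiples of
the rank-one projections `|e_n⟩⟨e_n| = S^n (1 - S S^*) S^{*n}`, hence is compact and belongs to the
Toeplitz algebra (`exists_diagonal`). Therefore `W` is invertible in the Toeplitz algebra, and both
`W` and `W⁻¹` are compact perturbations of `1`, that is, `(W, 1)` and `(W⁻¹, 1)` lie in `B̄`.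
Multiplying by these two elements exchanges the generators `(S^{*N}, 1)` and `(z^{*N}, 1)`.
-/

open InnerProductSpace

section Toeplitz

variable {H : Type*} [NormedAddCommGroup H] [InnerProductSpace ℂ H]

lemma clm_ext_basis (e : HilbertBasis ℕ ℂ H) {A B : H →L[ℂ] H}
    (h : ∀ n, A (e n) = B (e n)) : A = B := by
  refine ContinuousLinearMap.ext_on (s := Set.range e) ?_ ?_
  · exact (Submodule.dense_iff_topologicalClosure_eq_top).2 e.dense_span
  · rintro _ ⟨n, rfl⟩
    exact h n

lemma vec_ext_basis (e : HilbertBasis ℕ ℂ H) {x y : H}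
    (h : ∀ n, inner ℂ (e n) x = inner ℂ (e n) y) : x = y := by
  apply e.repr.injective
  ext n
  simpa [e.repr_apply_apply] using h n

lemma inner_basis (e : HilbertBasis ℕ ℂ H) (m n : ℕ) :
    inner ℂ (e m) (e n) = if m = n then (1 : ℂ) else 0 :=
  orthonormal_iff_ite.1 e.orthonormal m n

lemma star_shift_zero [CompleteSpace H] (e : HilbertBasis ℕ ℂ H) {S : H →L[ℂ] H}
    (hS : ∀ n : ℕ, S (e n) = e (n + 1)) : star S (e 0) = 0 := by
  apply vec_ext_basis e
  intro n
  rw [ContinuousLinearMap.star_eq_adjoint, ContinuousLinearMap.adjoint_inner_right, hS,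
    inner_basis]
  simp

lemma star_shift_succ [CompleteSpace H] (e : HilbertBasis ℕ ℂ H) {S : H →L[ℂ] H}
    (hS : ∀ n : ℕ, S (e n) = e (n + 1)) (n : ℕ) : star S (e (n + 1)) = e n := by
  apply vec_ext_basis e
  intro m
  rw [ContinuousLinearMap.star_eq_adjoint, ContinuousLinearMap.adjoint_inner_right, hS,
    inner_basis, inner_basis]
  simp

/-- The projection onto `e_n` equals `S^n (1 - S S^*) S^{*n}`, so it lies in the Toeplitz
algebra. -/
lemma rankOne_mem [CompleteSpace H] (e : HilbertBasis ℕ ℂ H) {S : H →L[ℂ] H}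
    (hS : ∀ n : ℕ, S (e n) = e (n + 1)) (n : ℕ) :
    rankOne ℂ (e n) (e n) ∈ StarAlgebra.elemental ℂ S := by
  have hs := StarAlgebra.elemental.self_mem ℂ S
  have hs' := StarAlgebra.elemental.star_self_mem ℂ S
  induction n with
  | zero =>
    have : rankOne ℂ (e 0) (e 0) = 1 - S * star S := by
      apply clm_ext_basis e
      intro n
      cases n with
      | zero => simp [star_shift_zero e hS, e.orthonormal.1 0]
      | succ n => simp [star_shift_succ e hS, hS, inner_basis]
    rw [this]
    exact sub_mem (one_mem _) (mul_mem hs hs')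
  | succ n ih =>
    have : rankOne ℂ (e (n + 1)) (e (n + 1)) = S * rankOne ℂ (e n) (e n) * star S := by
      rw [ContinuousLinearMap.mul_def, ContinuousLinearMap.mul_def, comp_rankOne, rankOne_comp,
        ContinuousLinearMap.star_eq_adjoint, ContinuousLinearMap.adjoint_adjoint, hS]
    rw [this]
    exact mul_mem (mul_mem hs ih) hs'

lemma isCompactOperator_rankOne (x y : H) : IsCompactOperator ⇑(rankOne ℂ x y) := by
  have h : IsCompactOperator ⇑(innerSL ℂ y) :=
    isCompactOperator_of_locallyCompactSpace_dom (innerSL ℂ y)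
  exact h.clm_comp (ContinuousLinearMap.toSpanSingleton ℂ x)

/-- A summable real sequence is the eigenvalue sequence of a compact self-adjoint diagonal operator
in the Toeplitz algebra. -/
lemma exists_diagonal [CompleteSpace H] (e : HilbertBasis ℕ ℂ H) {S : H →L[ℂ] H}
    (hS : ∀ n : ℕ, S (e n) = e (n + 1)) (c : ℕ → ℝ) (hc : Summable fun n => |c n|) :
    ∃ D : H →L[ℂ] H, D ∈ StarAlgebra.elemental ℂ S ∧ IsCompactOperator ⇑D ∧ star D = D ∧
      ∀ n, D (e n) = ((c n : ℝ) : ℂ) • e n := by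
  set f : ℕ → (H →L[ℂ] H) := fun n => ((c n : ℝ) : ℂ) • rankOne ℂ (e n) (e n) with hf
  have hsum : Summable f := by
    refine Summable.of_norm ?_
    refine hc.congr fun n => ?_
    simp [hf, norm_smul, e.orthonormal.1 n]
  refine ⟨∑' n, f n, ?_, ?_, ?_, ?_⟩
  · refine (StarAlgebra.elemental.isClosed ℂ S).mem_of_tendsto hsum.hasSum
      (Filter.Eventually.of_forall fun s => ?_)
    exact sum_mem fun n _ => SMulMemClass.smul_mem _ (rankOne_mem e hS n)
  · refine isCompactOperator_of_tendsto (F := fun s : Finset ℕ => ∑ n ∈ s, f n) hsum.hasSum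
      (Filter.Eventually.of_forall fun s => ?_)
    have : ∑ n ∈ s, f n ∈ compactOperator (RingHom.id ℂ) H H :=
      sum_mem fun n _ => Submodule.smul_mem _ _ (isCompactOperator_rankOne (e n) (e n))
    exact this
  · rw [tsum_star]
    refine tsum_congr fun n => ?_
    simp [hf, ContinuousLinearMap.star_eq_adjoint]
  · intro n
    have h1 : HasSum (fun m => f m (e n)) ((∑' m, f m) (e n)) :=
      hsum.hasSum.mapL (ContinuousLinearMap.apply ℂ H (e n))
    have h2 : HasSum (fun m => f m (e n)) (f n (e n)) := by
      refine hasSum_single n fun m hm => ?_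
      simp [hf, inner_basis, hm]
    rw [h1.unique h2]
    simp [hf, e.orthonormal.1 n]

end Toeplitz

/-- The eigenvalues of `W = (z_q^{*N} z_q^N)^{1/2}`: the weight picked up by `e_n` under
`z_q^N`. -/
noncomputable def shiftWeight (q : ℝ) (N n : ℕ) : ℝ :=
  ∏ k ∈ Finset.range N, Real.sqrt (1 - q ^ (n + k + 1))

section Weight

variable {q : ℝ}

lemma pow_le_sqrt_aux (hq : q ∈ Set.Ioo (0 : ℝ) 1) (n k : ℕ) :
    1 - q ^ (n + 1) ≤ Real.sqrt (1 - q ^ (n + k + 1)) := by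
  have h1 : q ^ (n + k + 1) ≤ q ^ (n + 1) :=
    pow_le_pow_of_le_one hq.1.le hq.2.le (by omega)
  have h2 : q ^ (n + 1) ≤ 1 := pow_le_one₀ hq.1.le hq.2.le
  have h3 : 0 < q ^ (n + 1) := pow_pos hq.1 _
  apply Real.le_sqrt_of_sq_le
  nlinarith

lemma pow_le_shiftWeight (hq : q ∈ Set.Ioo (0 : ℝ) 1) (N n : ℕ) :
    (1 - q ^ (n + 1)) ^ N ≤ shiftWeight q N n := by
  have h2 : q ^ (n + 1) ≤ 1 := pow_le_one₀ hq.1.le hq.2.le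
  calc (1 - q ^ (n + 1)) ^ N = ∏ _k ∈ Finset.range N, (1 - q ^ (n + 1)) := by simp
    _ ≤ _ := Finset.prod_le_prod (fun _ _ => by linarith) fun k _ => pow_le_sqrt_aux hq n k

lemma shiftWeight_lower (hq : q ∈ Set.Ioo (0 : ℝ) 1) (N n : ℕ) :
    (1 - q) ^ N ≤ shiftWeight q N n := by
  refine le_trans ?_ (pow_le_shiftWeight hq N n)
  have : q ^ (n + 1) ≤ q := pow_le_of_le_one hq.1.le hq.2.le (by omega)
  have := hq.2
  gcongr

lemma shiftWeight_pos (hq : q ∈ Set.Ioo (0 : ℝ) 1) (N n : ℕ) : 0 < shiftWeight q N n :=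
  lt_of_lt_of_le (pow_pos (by linarith [hq.2]) N) (shiftWeight_lower hq N n)

lemma abs_shiftWeight_sub_one (hq : q ∈ Set.Ioo (0 : ℝ) 1) (N n : ℕ) :
    |shiftWeight q N n - 1| ≤ N * q * q ^ n := by
  have h1 : shiftWeight q N n ≤ 1 := by
    refine Finset.prod_le_one (fun _ _ => Real.sqrt_nonneg _) fun k _ => ?_
    exact Real.sqrt_le_one.2 (by linarith [pow_pos hq.1 (n + k + 1)])
  have h2 : q ^ (n + 1) ≤ 1 := pow_le_one₀ hq.1.le hq.2.le
  have h3 := one_add_mul_le_pow (a := -q ^ (n + 1)) (by linarith) N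
  have h4 := pow_le_shiftWeight hq N n
  rw [← sub_eq_add_neg] at h3
  rw [abs_sub_comm, abs_of_nonneg (by linarith), mul_assoc, ← pow_succ']
  linarith

lemma summable_shiftWeight (hq : q ∈ Set.Ioo (0 : ℝ) 1) (N : ℕ) :
    Summable fun n => |shiftWeight q N n - 1| :=
  Summable.of_nonneg_of_le (fun _ => abs_nonneg _) (abs_shiftWeight_sub_one hq N)
    ((summable_geometric_of_lt_one hq.1.le hq.2).mul_left _)

lemma summable_shiftWeight_inv (hq : q ∈ Set.Ioo (0 : ℝ) 1) (N : ℕ) :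
    Summable fun n => |(shiftWeight q N n)⁻¹ - 1| := by
  refine Summable.of_nonneg_of_le (fun _ => abs_nonneg _) (fun n => ?_)
    ((summable_shiftWeight hq N).mul_left (((1 - q) ^ N)⁻¹))
  have hw := shiftWeight_pos hq N n
  have hp : 0 < (1 - q) ^ N := pow_pos (by linarith [hq.2]) N
  have : (shiftWeight q N n)⁻¹ - 1 = (shiftWeight q N n)⁻¹ * -(shiftWeight q N n - 1) := by
    field_simp
    ring
  rw [this, abs_mul, abs_neg, abs_of_pos (inv_pos.2 hw)]
  have := shiftWeight_lower hq N n
  gcongr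

end Weight

section Factor

variable {H : Type*} [NormedAddCommGroup H] [InnerProductSpace ℂ H]

lemma shift_pow_apply (e : HilbertBasis ℕ ℂ H) {S : H →L[ℂ] H}
    (hS : ∀ n : ℕ, S (e n) = e (n + 1)) (N n : ℕ) : (S ^ N) (e n) = e (n + N) := by
  induction N with
  | zero => simp
  | succ N ih => rw [pow_succ', mul_apply_eq_comp, ih, hS, add_assoc]

lemma weighted_pow_apply (e : HilbertBasis ℕ ℂ H) {q : ℝ} {z : H →L[ℂ] H}
    (hz : ∀ n : ℕ, z (e n) = ((Real.sqrt (1 - q ^ (n + 1)) : ℝ) : ℂ) • e (n + 1)) (N n : ℕ) :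
    (z ^ N) (e n) = ((shiftWeight q N n : ℝ) : ℂ) • e (n + N) := by
  induction N with
  | zero => simp [shiftWeight]
  | succ N ih =>
    rw [pow_succ', mul_apply_eq_comp, ih, map_smul, hz, smul_smul, shiftWeight,
      shiftWeight, Finset.prod_range_succ, Complex.ofReal_mul, add_assoc n N 1]

/-- The polar-type factorization `z^{*N} = W S^{*N}`, with `W` invertible in the Toeplitz algebra and
`W`, `W⁻¹` equal to `1` modulo the compact operators; `V` is the inverse of `W` (only the identity
`V W = 1` is recorded). -/
lemma exists_factor [CompleteSpace H] (e : HilbertBasis ℕ ℂ H) {S : H →L[ℂ] H}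
    (hS : ∀ n : ℕ, S (e n) = e (n + 1)) {q : ℝ} (hq : q ∈ Set.Ioo (0 : ℝ) 1) {z : H →L[ℂ] H}
    (hz : ∀ n : ℕ, z (e n) = ((Real.sqrt (1 - q ^ (n + 1)) : ℝ) : ℂ) • e (n + 1)) (N : ℕ) :
    ∃ W V : H →L[ℂ] H, W ∈ StarAlgebra.elemental ℂ S ∧ V ∈ StarAlgebra.elemental ℂ S ∧
      IsCompactOperator ⇑(W - 1) ∧ IsCompactOperator ⇑(V - 1) ∧ V * W = 1 ∧
      (star z) ^ N = W * (star S) ^ N := by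
  obtain ⟨D, hD, hDc, hDs, hDe⟩ := exists_diagonal e hS _ (summable_shiftWeight hq N)
  obtain ⟨E, hE, hEc, -, hEe⟩ := exists_diagonal e hS _ (summable_shiftWeight_inv hq N)
  have hW : ∀ n, (1 + D) (e n) = ((shiftWeight q N n : ℝ) : ℂ) • e n := fun n => by
    rw [add_apply, one_apply_eq_self, hDe]
    push_cast
    module
  have hV : ∀ n, (1 + E) (e n) = (((shiftWeight q N n : ℝ) : ℂ)⁻¹) • e n := fun n => by
    rw [add_apply, one_apply_eq_self, hEe]
    push_cast
    module
  refine ⟨1 + D, 1 + E, add_mem (one_mem _) hD, add_mem (one_mem _) hE, by simpa using hDc,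
    by simpa using hEc, ?_, ?_⟩
  · apply clm_ext_basis e
    intro n
    have : ((shiftWeight q N n : ℝ) : ℂ) ≠ 0 :=
      Complex.ofReal_ne_zero.2 (shiftWeight_pos hq N n).ne'
    rw [mul_apply_eq_comp, hW, map_smul, hV, smul_smul, mul_inv_cancel₀ this]
    simp
  · have hzS : z ^ N = S ^ N * (1 + D) := by
      apply clm_ext_basis e
      intro n
      rw [mul_apply_eq_comp, hW, map_smul, shift_pow_apply e hS,
        weighted_pow_apply e hz]
    rw [← star_pow, hzS, star_mul, star_add, star_one, hDs, star_pow]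

/-- The compactness part of the stability of `B̄` under right multiplication by `(W, 1)`: it follows
from `a W - b = a (W - 1) + (a - b)`. -/
lemma isCompact_mul_sub {a b W : H →L[ℂ] H} (hab : IsCompactOperator ⇑(a - b))
    (hW : IsCompactOperator ⇑(W - 1)) : IsCompactOperator ⇑(a * W - b) := by
  have h : a * W - b = a * (W - 1) + (a - b) := by noncomm_ring
  rw [h]
  exact (hW.clm_comp a).add hab

end Factor

/-- For `q ∈ (0,1)` and `N ≥ 1`, the left `B̄`-module
`C_N = {(f S^{*N}, g) : (f,g) ∈ B̄} ⊆ T × T` is generated by the single element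
`(z_q^{*N}, 1)`: one has `(z_q^{*N}, 1) ∈ C_N` and
`C_N = {(a,b)·(z_q^{*N}, 1) : (a,b) ∈ B̄} = {(a z_q^{*N}, b) : (a,b) ∈ B̄}`. -/
theorem statement19
    {H : Type*} [NormedAddCommGroup H] [InnerProductSpace ℂ H] [CompleteSpace H]
    (e : HilbertBasis ℕ ℂ H) (S : H →L[ℂ] H)
    (hS : ∀ n : ℕ, S (e n) = e (n + 1))
    (q : ℝ) (hq : q ∈ Set.Ioo (0 : ℝ) 1)
    (z : H →L[ℂ] H)
    (hz : ∀ n : ℕ, z (e n) = ((Real.sqrt (1 - q ^ (n + 1)) : ℝ) : ℂ) • e (n + 1))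
    (N : ℕ) (hN : 1 ≤ N)
    (Bbar : Set ((H →L[ℂ] H) × (H →L[ℂ] H)))
    (hBbar : Bbar = {x : (H →L[ℂ] H) × (H →L[ℂ] H) |
      x.1 ∈ StarAlgebra.elemental ℂ S ∧ x.2 ∈ StarAlgebra.elemental ℂ S ∧
        IsCompactOperator ⇑(x.1 - x.2)})
    (C : Set ((H →L[ℂ] H) × (H →L[ℂ] H)))
    (hC : C = {x : (H →L[ℂ] H) × (H →L[ℂ] H) |
      ∃ p ∈ Bbar, x = (p.1 * (star S) ^ N, p.2)}) :
    ((star z) ^ N, (1 : H →L[ℂ] H)) ∈ C ∧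
    C = {x : (H →L[ℂ] H) × (H →L[ℂ] H) | ∃ a ∈ Bbar, x = (a.1 * (star z) ^ N, a.2)} := by
  obtain ⟨W, V, hW, hV, hWc, hVc, hVW, hzW⟩ := exists_factor e hS hq hz N
  subst hBbar hC
  refine ⟨⟨(W, 1), ⟨hW, one_mem _, hWc⟩, by rw [hzW]⟩, ?_⟩
  ext x
  constructor
  · rintro ⟨p, ⟨h1, h2, h3⟩, rfl⟩
    refine ⟨(p.1 * V, p.2), ⟨mul_mem h1 hV, h2, isCompact_mul_sub h3 hVc⟩, ?_⟩
    have h : p.1 * V * (W * star S ^ N) = p.1 * star S ^ N := by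
      rw [mul_assoc, ← mul_assoc V, hVW, one_mul]
    simp only [hzW, h]
  · rintro ⟨p, ⟨h1, h2, h3⟩, rfl⟩
    refine ⟨(p.1 * W, p.2), ⟨mul_mem h1 hW, h2, isCompact_mul_sub h3 hWc⟩, ?_⟩
    simp only [hzW, mul_assoc]
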